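/- Suppose E[V(y Z)] < ∞ for every y > 0, where V is the convex conjugate of the utility function U. For n ∈ ℕ let 𝒞ₙ := {f : Ω → ℝ measurable : 0 ≤ f ≤ n}. Then for every y > 0, lim_{n→∞} sup_{f ∈ 𝒞ₙ} E[U(f) − f y Z] = sup_{x>0} { u(x, U) − x y }. -/

import Mathlib

/-!
The supremum over the balls is nondecreasing in `n`, so its limit is the supremum over all bounded
nonnegative `f`. Since `f y Z` is integrable for such `f`, `E[U(f) − f y Z] = E[U(f)] − y E[Z f]`
(`eexp_sub_real`), where `f` is admissible for every budget `x > E[Z f]`; letting `x ↓ E[Z f]` gives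
"≤" (the budget `x = E[Z f]` itself is not allowed when `f = 0` almost surely).

For "≥", let `f ∈ C(x)` have `U(f)⁻` integrable. Truncating to `f ∧ n` lowers the cost `E[Z f]`. As
soon as `U(n) > 0`, the truncation leaves the negative part of `U(f)` unchanged, while
the positive parts increase to that of `U(f)`, so monotone convergence (`lintegral_pos_trunc`) gives
`E[U(f ∧ n)] → E[U(f)]`, even when the latter is `+∞`.
-/

open MeasureTheory Filter Set Topology ENNReal

noncomputable section

/-- The utility function extended to all of `ℝ`, with value `−∞` on `(−∞,0)` and
`U(0) := lim_{x ↓ 0} U(x)` (here, by monotonicity, the infimum over `(0,∞)`). -/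
def Uext (U : ℝ → ℝ) : ℝ → EReal := fun x =>
  if 0 < x then (U x : EReal)
  else if x = 0 then ⨅ z : {z : ℝ // 0 < z}, ((U z.1 : ℝ) : EReal)
  else ⊥

/-- A (possibly non-concave) utility function. -/
structure IsUtility (U : ℝ → ℝ) : Prop where
  mono : ∀ ⦃x y : ℝ⦄, 0 < x → x ≤ y → U x ≤ U y
  nonconst : ∃ x y : ℝ, 0 < x ∧ 0 < y ∧ U x ≠ U y
  usc : UpperSemicontinuousOn U (Set.Ioi 0)
  growth : Filter.Tendsto (fun x => U x / x) Filter.atTop (nhds 0)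
  pos_limit : ∃ x : ℝ, 0 < x ∧ 0 < U x

/-- Concavity for `EReal`-valued functions on `ℝ`. -/
def ERealConcave (g : ℝ → EReal) : Prop :=
  ∀ x y : ℝ, ∀ t : ℝ, 0 ≤ t → t ≤ 1 →
    ((t : ℝ) : EReal) * g x + (((1 - t) : ℝ) : EReal) * g y ≤ g (t * x + (1 - t) * y)

/-- `Uc` is the concave envelope of the utility `U`: the smallest concave function
dominating (the extension of) `U`. -/
def IsConcaveEnvelope (U : ℝ → ℝ) (Uc : ℝ → EReal) : Prop :=
  ERealConcave Uc ∧ (∀ x : ℝ, Uext U x ≤ Uc x) ∧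
    ∀ g : ℝ → EReal, ERealConcave g → (∀ x : ℝ, Uext U x ≤ g x) → ∀ x : ℝ, Uc x ≤ g x

/-- The convex conjugate `V(y) = sup_{x > 0} (U(x) − x y)`. -/
def conj (U : ℝ → ℝ) (y : ℝ) : ℝ :=
  sSup ((fun x => U x - x * y) '' Set.Ioi (0 : ℝ))

/-- The subdifferential of a convex function `V` (viewed on `(0,∞)`). -/
def subdiff (V : ℝ → ℝ) (y : ℝ) : Set ℝ :=
  {q : ℝ | ∀ z : ℝ, 0 < z → V y + q * (z - y) ≤ V z}

/-- The extended asymptotic elasticity `EAE(V) = limsup_{y ↓ 0} sup_{q ∈ ∂V(y)} |q| y / V(y)`. -/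
def EAE (V : ℝ → ℝ) : EReal :=
  Filter.limsup (fun y : ℝ => ⨆ q ∈ subdiff V y, (((|q| * y / V y) : ℝ) : EReal))
    (nhdsWithin (0 : ℝ) (Set.Ioi 0))

/-- The positive part of an extended real number, as an element of `ℝ≥0∞`. -/
def erealPos (a : EReal) : ℝ≥0∞ := if a = ⊤ then ⊤ else ENNReal.ofReal a.toReal

/-- The expectation of an `EReal`-valued function: `E[g] = E[g⁺] − E[g⁻]`, with the
convention `E[g] = −∞` whenever the negative part `g⁻` is not integrable. -/
def eexp {Ω : Type*} [MeasurableSpace Ω] (μ : Measure Ω) (g : Ω → EReal) : EReal :=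
  if (∫⁻ ω, erealPos (-(g ω)) ∂μ) < ⊤ then
    ((∫⁻ ω, erealPos (g ω) ∂μ : ℝ≥0∞) : EReal) - (((∫⁻ ω, erealPos (-(g ω)) ∂μ).toReal : ℝ) : EReal)
  else ⊥

/-- The set `C(x)` of attainable terminal liquidation values: nonnegative measurable `f`
with `E[Z f] ≤ x`. -/
def Cset {Ω : Type*} [MeasurableSpace Ω] (μ : Measure Ω) (Z : Ω → ℝ) (x : ℝ) :
    Set (Ω → ℝ) :=
  {f | Measurable f ∧ (∀ ω, 0 ≤ f ω) ∧
    (∫⁻ ω, ENNReal.ofReal (Z ω * f ω) ∂μ) ≤ ENNReal.ofReal x}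

/-- The value function `u(x, W) = sup {E[W(f)] : f ∈ C(x)}`. -/
def valueFn {Ω : Type*} [MeasurableSpace Ω] (μ : Measure Ω) (Z : Ω → ℝ)
    (W : ℝ → EReal) (x : ℝ) : EReal :=
  ⨆ f ∈ Cset μ Z x, eexp μ (fun ω => W (f ω))

end
noncomputable section

/-- The ball of radius `n` in the positive orthant of `L⁰`. -/
def Cball {Ω : Type*} [MeasurableSpace Ω] (n : ℕ) : Set (Ω → ℝ) :=
  {f | Measurable f ∧ ∀ ω, 0 ≤ f ω ∧ f ω ≤ (n : ℝ)}

lemma uext_mono {U : ℝ → ℝ} (hU : IsUtility U) : Monotone (Uext U) := by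
  intro a b hab
  unfold Uext
  rcases lt_trichotomy a 0 with ha | ha | ha
  · simp [ha.not_gt, ha.ne]
  · subst ha
    rcases hab.eq_or_lt with hb | hb
    · simp [← hb]
    · simp only [lt_irrefl, if_false, if_true, hb]
      exact iInf_le (fun z : {z : ℝ // 0 < z} => ((U z.1 : ℝ) : EReal)) ⟨b, hb⟩
  · have hb : 0 < b := ha.trans_le hab
    simp only [ha, hb, if_true]
    exact_mod_cast hU.mono ha hab

lemma measurable_erealPos : Measurable erealPos := by
  unfold erealPos
  exact Measurable.ite (measurableSet_singleton _) measurable_const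
    (ENNReal.measurable_ofReal.comp measurable_ereal_toReal)

lemma erealPos_mono : Monotone erealPos := by
  intro a b hab
  induction b with
  | top => simp [erealPos]
  | bot => rw [le_bot_iff.1 hab]
  | coe b =>
    induction a with
    | top => simp at hab
    | bot => simp [erealPos]
    | coe a =>
      have h : a ≤ b := by exact_mod_cast hab
      simpa [erealPos] using ENNReal.ofReal_le_ofReal h

lemma erealPos_eq_zero {a : EReal} (ha : a ≤ 0) : erealPos a = 0 := by
  have h := erealPos_mono ha
  simpa [erealPos] using h

/-- Rearranged form of `(a - h)⁺ - (a - h)⁻ = a⁺ - a⁻ - h`, free of subtractions. -/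
lemma erealPos_sub_identity (a : EReal) {h : ℝ} (hh : 0 ≤ h) :
    erealPos (a - (h : EReal)) + (erealPos (-a) + ENNReal.ofReal h)
      = erealPos (-(a - (h : EReal))) + erealPos a := by
  induction a with
  | top => simp [erealPos]
  | bot => simp [erealPos]
  | coe a =>
    have e1 : erealPos ((a : EReal) - (h : EReal)) = ENNReal.ofReal (a - h) := by
      rw [← EReal.coe_sub, erealPos, if_neg (EReal.coe_ne_top _), EReal.toReal_coe]
    have e2 : erealPos (-((a : EReal) - (h : EReal))) = ENNReal.ofReal (-(a - h)) := by
      rw [← EReal.coe_sub, ← EReal.coe_neg, erealPos, if_neg (EReal.coe_ne_top _),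
        EReal.toReal_coe]
    have e3 : erealPos (-(a : EReal)) = ENNReal.ofReal (-a) := by
      rw [← EReal.coe_neg, erealPos, if_neg (EReal.coe_ne_top _), EReal.toReal_coe]
    have e4 : erealPos (a : EReal) = ENNReal.ofReal a := by
      rw [erealPos, if_neg (EReal.coe_ne_top _), EReal.toReal_coe]
    have key : ∀ t : ℝ, ENNReal.ofReal t = ENNReal.ofReal (max t 0) := by
      intro t
      rcases le_total t 0 with ht | ht <;> simp [ht]
    rw [e1, e2, e3, e4, key (a - h), key (-a), key (-(a - h)), key a,
      ← ENNReal.ofReal_add (by positivity) hh,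
      ← ENNReal.ofReal_add (by positivity) (by positivity),
      ← ENNReal.ofReal_add (by positivity) (by positivity)]
    congr 1
    simp only [max_def]
    split_ifs <;> linarith

/-- Expectation is additive when an integrable nonnegative real function is subtracted; neither
side needs the positive part of `g` to be integrable. -/
lemma eexp_sub_real {Ω : Type*} [MeasurableSpace Ω] (μ : Measure Ω) {g : Ω → EReal}
    (hg : Measurable g) {h : Ω → ℝ} (hh : Measurable h) (h0 : ∀ ω, 0 ≤ h ω)
    (hfin : (∫⁻ ω, ENNReal.ofReal (h ω) ∂μ) < ⊤) :
    eexp μ (fun ω => g ω - ((h ω : ℝ) : EReal))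
      = eexp μ g - (((∫⁻ ω, ENNReal.ofReal (h ω) ∂μ).toReal : ℝ) : EReal) := by
  have mgp : Measurable fun ω => erealPos (g ω) := measurable_erealPos.comp hg
  have mgn : Measurable fun ω => erealPos (-(g ω)) := measurable_erealPos.comp hg.neg
  have mh : Measurable fun ω => ENNReal.ofReal (h ω) := hh.ennreal_ofReal
  have id1 : (∫⁻ ω, erealPos (g ω - ((h ω : ℝ) : EReal)) ∂μ)
      + ((∫⁻ ω, erealPos (-(g ω)) ∂μ) + ∫⁻ ω, ENNReal.ofReal (h ω) ∂μ)
      = (∫⁻ ω, erealPos (-(g ω - ((h ω : ℝ) : EReal))) ∂μ) + ∫⁻ ω, erealPos (g ω) ∂μ := by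
    have mgh : Measurable fun ω => erealPos (-(g ω)) + ENNReal.ofReal (h ω) := mgn.add mh
    rw [← lintegral_add_left mgn, ← lintegral_add_right _ mgh, ← lintegral_add_right _ mgp]
    exact lintegral_congr fun ω => erealPos_sub_identity (g ω) (h0 ω)
  have pw1 : ∀ ω, erealPos (-(g ω)) ≤ erealPos (-(g ω - ((h ω : ℝ) : EReal))) := by
    intro ω
    apply erealPos_mono
    rw [EReal.neg_le_neg_iff]
    have : (0 : EReal) ≤ ((h ω : ℝ) : EReal) := by exact_mod_cast h0 ω
    exact EReal.sub_le_of_le_add (le_add_of_nonneg_right this)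
  have pw2 : ∀ ω, erealPos (-(g ω - ((h ω : ℝ) : EReal)))
      ≤ erealPos (-(g ω)) + ENNReal.ofReal (h ω) := by
    intro ω
    have hid := erealPos_sub_identity (g ω) (h0 ω)
    have : (0 : EReal) ≤ ((h ω : ℝ) : EReal) := by exact_mod_cast h0 ω
    by_cases hp : g ω - ((h ω : ℝ) : EReal) ≤ 0
    · rw [erealPos_eq_zero hp, zero_add] at hid
      rw [hid]; exact le_self_add
    · push Not at hp
      rw [erealPos_eq_zero]
      · exact zero_le
      · rw [EReal.neg_le, neg_zero]; exact hp.le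
  by_cases hc : (∫⁻ ω, erealPos (-(g ω)) ∂μ) < ⊤
  · have hc' : (∫⁻ ω, erealPos (-(g ω - ((h ω : ℝ) : EReal))) ∂μ) < ⊤ := by
      refine (lintegral_mono pw2).trans_lt ?_
      rw [lintegral_add_left mgn]
      exact ENNReal.add_lt_top.2 ⟨hc, hfin⟩
    unfold eexp
    rw [if_pos hc, if_pos hc']
    generalize (∫⁻ ω, erealPos (-(g ω - ((h ω : ℝ) : EReal))) ∂μ) = B at *
    generalize (∫⁻ ω, erealPos (g ω - ((h ω : ℝ) : EReal)) ∂μ) = A at *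
    generalize (∫⁻ ω, erealPos (-(g ω)) ∂μ) = b at *
    generalize (∫⁻ ω, erealPos (g ω) ∂μ) = a at *
    generalize (∫⁻ ω, ENNReal.ofReal (h ω) ∂μ) = c at *
    lift b to NNReal using hc.ne
    lift B to NNReal using hc'.ne
    lift c to NNReal using hfin.ne
    induction A with
    | top =>
      have ha : a = ⊤ := by
        by_contra ha
        lift a to NNReal using ha
        simp at id1
        exact absurd id1.symm (by exact_mod_cast ENNReal.coe_ne_top)
      subst ha
      simp
    | coe A =>
      have ha : a ≠ ⊤ := by
        rintro rfl
        simp at id1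
      lift a to NNReal using ha
      have id2 : (A : ℝ) + (b + c) = B + a := by exact_mod_cast id1
      simp only [ENNReal.coe_toReal]
      have co : ∀ t : NNReal, (((t : ℝ≥0∞)) : EReal) = ((t : ℝ) : EReal) := fun t => rfl
      rw [co, co, ← EReal.coe_sub, ← EReal.coe_sub, ← EReal.coe_sub]
      congr 1
      linarith
  · have hc' : ¬ (∫⁻ ω, erealPos (-(g ω - ((h ω : ℝ) : EReal))) ∂μ) < ⊤ :=
      fun hlt => hc ((lintegral_mono pw1).trans_lt hlt)
    unfold eexp
    rw [if_neg hc, if_neg hc', EReal.bot_sub]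

/-- Monotone convergence along the truncations `f ∧ n`; the limit may be infinite. -/
lemma lintegral_pos_trunc {Ω : Type*} [MeasurableSpace Ω] (μ : Measure Ω)
    {U : ℝ → ℝ} (hU : IsUtility U) {f : Ω → ℝ} (hf : Measurable f) :
    Tendsto (fun n : ℕ => ∫⁻ ω, erealPos (Uext U (min (f ω) n)) ∂μ) atTop
      (𝓝 (∫⁻ ω, erealPos (Uext U (f ω)) ∂μ)) := by
  have hm : Monotone fun t => erealPos (Uext U t) := erealPos_mono.comp (uext_mono hU)
  refine lintegral_tendsto_of_tendsto_of_monotone ?_ ?_ ?_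
  · exact fun n => (hm.measurable.comp (hf.min measurable_const)).aemeasurable
  · refine ae_of_all _ fun ω m n hmn => hm ?_
    exact min_le_min le_rfl (by exact_mod_cast hmn)
  · refine ae_of_all _ fun ω => ?_
    refine tendsto_const_nhds.congr' ?_
    filter_upwards [eventually_ge_atTop ⌈f ω⌉₊] with n hn
    rw [min_eq_left (Nat.ceil_le.1 hn)]

/-- Truncation at a level where `U` is positive does not change the negative part of `U(f)`. -/
lemma neg_part_trunc {U : ℝ → ℝ} (hU : IsUtility U) {n : ℝ} (hn : 0 < n) (hpos : 0 ≤ U n)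
    (t : ℝ) : erealPos (-(Uext U (min t n))) = erealPos (-(Uext U t)) := by
  rcases le_total t n with h | h
  · rw [min_eq_left h]
  · have h0 : 0 ≤ Uext U n := by
      simp only [Uext, hn, if_true]; exact_mod_cast hpos
    rw [min_eq_right h, erealPos_eq_zero, erealPos_eq_zero]
    · rw [EReal.neg_le, neg_zero]; exact h0.trans (uext_mono hU h)
    · rw [EReal.neg_le, neg_zero]; exact h0

/-- On the balls the cost term can be split off the expectation. -/
lemma eexp_ball {Ω : Type*} [MeasurableSpace Ω] (μ : Measure Ω)
    {Z : Ω → ℝ} (hZmeas : Measurable Z) (hZpos : ∀ ω, 0 < Z ω) (hZint : Integrable Z μ)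
    {U : ℝ → ℝ} (hU : IsUtility U) {y : ℝ} (hy : 0 < y) {n : ℕ} {f : Ω → ℝ}
    (hf : f ∈ (Cball n : Set (Ω → ℝ))) :
    (∫⁻ ω, ENNReal.ofReal (Z ω * f ω) ∂μ) < ⊤ ∧
    eexp μ (fun ω => Uext U (f ω) - (((f ω * (y * Z ω)) : ℝ) : EReal))
      = eexp μ (fun ω => Uext U (f ω))
        - (((∫⁻ ω, ENNReal.ofReal (Z ω * f ω) ∂μ).toReal * y : ℝ) : EReal) := by
  obtain ⟨hfm, hfb⟩ := hf
  have hfin : (∫⁻ ω, ENNReal.ofReal (Z ω * f ω) ∂μ) < ⊤ := by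
    refine (lintegral_mono (g := fun ω => ENNReal.ofReal (Z ω * n)) fun ω =>
      ENNReal.ofReal_le_ofReal
        (mul_le_mul_of_nonneg_left (hfb ω).2 (hZpos ω).le)).trans_lt ?_
    exact (hZint.mul_const (n : ℝ)).lintegral_lt_top
  have hm1 : Measurable fun ω => Z ω * f ω := hZmeas.mul hfm
  have hm2 : Measurable fun ω => f ω * (y * Z ω) := hfm.mul (hZmeas.const_mul y)
  have hscale : (∫⁻ ω, ENNReal.ofReal (f ω * (y * Z ω)) ∂μ)
      = ENNReal.ofReal y * ∫⁻ ω, ENNReal.ofReal (Z ω * f ω) ∂μ := by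
    rw [← lintegral_const_mul _ hm1.ennreal_ofReal]
    refine lintegral_congr fun ω => ?_
    rw [← ENNReal.ofReal_mul hy.le]
    congr 1; ring
  refine ⟨hfin, ?_⟩
  rw [eexp_sub_real μ (g := fun ω => Uext U (f ω)) ((uext_mono hU).measurable.comp hfm)
    hm2
    (fun ω => mul_nonneg (hfb ω).1 (mul_nonneg hy.le (hZpos ω).le))]
  · rw [hscale, ENNReal.toReal_mul, ENNReal.toReal_ofReal hy.le, mul_comm y]
  · rw [hscale]; exact ENNReal.mul_lt_top ENNReal.ofReal_lt_top hfin

/-- `lim_{n→∞} sup_{f ∈ 𝒞ₙ} E[U(f) − f y Z] = sup_{x>0} (u(x,U) − x y)` for `y > 0`. -/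
theorem limit_sup_over_balls_eq_conjugate_of_value
    {Ω : Type*} [MeasurableSpace Ω] (μ : MeasureTheory.Measure Ω)
    [MeasureTheory.IsProbabilityMeasure μ]
    (Z : Ω → ℝ) (hZmeas : Measurable Z) (hZpos : ∀ ω, 0 < Z ω)
    (hZint : MeasureTheory.Integrable Z μ) (hZexp : ∫ ω, Z ω ∂μ = 1)
    (U : ℝ → ℝ) (hU : IsUtility U)
    (hV : ∀ y : ℝ, 0 < y → eexp μ (fun ω => ((conj U (y * Z ω) : ℝ) : EReal)) < ⊤)
    (y : ℝ) (hy : 0 < y) :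
    Filter.Tendsto
      (fun n : ℕ => ⨆ f ∈ (Cball n : Set (Ω → ℝ)),
        eexp μ (fun ω => Uext U (f ω) - (((f ω * (y * Z ω)) : ℝ) : EReal)))
      Filter.atTop
      (nhds (⨆ x : {x : ℝ // 0 < x},
        (valueFn μ Z (Uext U) x.1 - (((x.1 * y) : ℝ) : EReal)))) := by
  have hmono : Monotone (fun n : ℕ => ⨆ f ∈ (Cball n : Set (Ω → ℝ)),
      eexp μ (fun ω => Uext U (f ω) - (((f ω * (y * Z ω)) : ℝ) : EReal))) := by
    intro m n hmn
    refine biSup_mono fun f hf => ⟨hf.1, fun ω => ⟨(hf.2 ω).1, (hf.2 ω).2.trans ?_⟩⟩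
    exact_mod_cast hmn
  convert tendsto_atTop_iSup hmono using 2
  apply le_antisymm
  · refine iSup_le fun x => ?_
    obtain ⟨x, hx⟩ := x
    refine EReal.sub_le_of_le_add ?_
    refine iSup₂_le fun f hf => ?_
    obtain ⟨hfm, hf0, hfx⟩ := hf
    by_cases hc : (∫⁻ ω, erealPos (-(Uext U (f ω))) ∂μ) < ⊤
    swap
    · unfold eexp; rw [if_neg hc]; exact bot_le
    unfold eexp; rw [if_pos hc]
    refine EReal.sub_le_of_le_add ?_
    refine le_of_tendsto (continuous_coe_ennreal_ereal.tendsto _ |>.comp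
      (lintegral_pos_trunc μ hU hfm)) ?_
    -- Only truncation levels `n ≥ x₀` with `U x₀ > 0` keep the negative part unchanged.
    obtain ⟨x₀, hx₀, hUx₀⟩ := hU.pos_limit
    filter_upwards [eventually_ge_atTop ⌈x₀⌉₊] with n hn
    have hn' : x₀ ≤ n := Nat.ceil_le.1 hn
    have hn0 : (0 : ℝ) < n := hx₀.trans_le hn'
    have hUn : 0 ≤ U n := hUx₀.le.trans (hU.mono hx₀ hn')
    have hball : (fun ω => min (f ω) n) ∈ (Cball n : Set (Ω → ℝ)) :=
      ⟨hfm.min measurable_const, fun ω => ⟨le_min (hf0 ω) hn0.le, min_le_right _ _⟩⟩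
    obtain ⟨hfin, heq⟩ := eexp_ball μ hZmeas hZpos hZint hU hy hball
    have hle := (le_iSup₂ (f := fun (f : Ω → ℝ) (_ : f ∈ (Cball n : Set (Ω → ℝ))) =>
      eexp μ (fun ω => Uext U (f ω) - (((f ω * (y * Z ω)) : ℝ) : EReal))) _ hball).trans
      (le_iSup (fun n : ℕ => ⨆ f ∈ (Cball n : Set (Ω → ℝ)),
        eexp μ (fun ω => Uext U (f ω) - (((f ω * (y * Z ω)) : ℝ) : EReal))) n)
    rw [heq] at hle
    unfold eexp at hle
    simp only [neg_part_trunc hU hn0 hUn] at hle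
    rw [if_pos hc] at hle
    have hcost : (∫⁻ ω, ENNReal.ofReal (Z ω * min (f ω) n) ∂μ).toReal ≤ x := by
      refine ENNReal.toReal_le_of_le_ofReal hx.le (le_trans (lintegral_mono fun ω => ?_) hfx)
      exact ENNReal.ofReal_le_ofReal
        (mul_le_mul_of_nonneg_left (min_le_left _ _) (hZpos ω).le)
    have hcost' : (((∫⁻ ω, ENNReal.ofReal (Z ω * min (f ω) n) ∂μ).toReal * y : ℝ) : EReal)
        ≤ ((x * y : ℝ) : EReal) := by
      exact_mod_cast mul_le_mul_of_nonneg_right hcost hy.le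
    rw [EReal.sub_le_iff_le_add (Or.inl (EReal.coe_ne_bot _)) (Or.inl (EReal.coe_ne_top _)),
      EReal.sub_le_iff_le_add (Or.inl (EReal.coe_ne_bot _)) (Or.inl (EReal.coe_ne_top _))] at hle
    exact hle.trans (by gcongr)
  · refine iSup_le fun n => iSup₂_le fun f hf => ?_
    obtain ⟨hfin, heq⟩ := eexp_ball μ hZmeas hZpos hZint hU hy hf
    rw [heq]
    set I := (∫⁻ ω, ENNReal.ofReal (Z ω * f ω) ∂μ).toReal with hI
    have hI0 : 0 ≤ I := ENNReal.toReal_nonneg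
    refine EReal.sub_le_of_le_add ?_
    set R := ⨆ x : {x : ℝ // 0 < x},
        (valueFn μ Z (Uext U) x.1 - (((x.1 * y) : ℝ) : EReal)) with hR
    -- The bound for all budgets `x > I` passes to the limit `x ↓ I`.
    have hlim : Tendsto (fun x : ℝ => R + ((x * y : ℝ) : EReal)) (𝓝[>] I)
        (𝓝 (R + ((I * y : ℝ) : EReal))) := by
      have h1 : Tendsto (fun x : ℝ => ((x * y : ℝ) : EReal)) (𝓝[>] I)
          (𝓝 ((I * y : ℝ) : EReal)) :=
        ((continuous_coe_real_ereal.comp (continuous_mul_const y)).tendsto I).mono_left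
          nhdsWithin_le_nhds
      exact (EReal.continuousAt_add (p := (R, ((I * y : ℝ) : EReal)))
        (Or.inr (EReal.coe_ne_bot _)) (Or.inr (EReal.coe_ne_top _))).tendsto.comp
        (tendsto_const_nhds.prodMk_nhds h1)
    refine ge_of_tendsto hlim ?_
    filter_upwards [self_mem_nhdsWithin] with x hx
    have hx' : I < x := hx
    have hmem : f ∈ Cset μ Z x := by
      refine ⟨hf.1, fun ω => (hf.2 ω).1, ?_⟩
      rw [← ENNReal.ofReal_toReal hfin.ne]
      exact ENNReal.ofReal_le_ofReal hx'.le
    have h1 : eexp μ (fun ω => Uext U (f ω)) ≤ valueFn μ Z (Uext U) x :=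
      le_iSup₂ (f := fun (f : Ω → ℝ) (_ : f ∈ Cset μ Z x) =>
        eexp μ (fun ω => Uext U (f ω))) f hmem
    have h2 := le_iSup (fun x : {x : ℝ // 0 < x} =>
      (valueFn μ Z (Uext U) x.1 - (((x.1 * y) : ℝ) : EReal))) ⟨x, hI0.trans_lt hx'⟩
    rw [EReal.sub_le_iff_le_add (Or.inl (EReal.coe_ne_bot _))
      (Or.inl (EReal.coe_ne_top _))] at h2
    exact h1.trans h2

end
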